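/- All of the following one-sided derivatives vanish at r = 0 and at r = r₀: ∂_r p₋, ∂_r p₊, ∂_r ρ₋, ∂_r ρ₊, ∂_r q₊, ∂_r (M₋²), ∂_r (M₊²), ∂_r s₋, and ∂_r s₊. (First part of Lemma 3.1 of the paper.) -/

import Mathlib

/-!
A composite `F ∘ u` has zero derivative wherever `u` does, as soon as `F` is differentiable there.
Hence everything follows once `p₋`, `q₋` and `ρ₋` are stationary at the endpoints. Conditions (i)
and (ii) have the form `r f'(r) = w₋(r)² G(r)` with `G` continuous: at `r₀` one divides by `r₀`, and
as `r → 0` one has `f'(r) = (w₋(r) / r) w₋(r) G(r) → w₋'(0) · 0 · G(0) = 0`, so `f'(0) = 0` by the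
mean value theorem. This applies to `f = p₋` and to `f = 1 / M₋²`; then
`ρ₋ = γ p₋ M₋² / q₋²` is stationary as well.

Since the flow is not assumed supersonic, `p₊` may vanish at an endpoint, where `M₊²` and `s₊`
are singular. There `F` is `y ↦ y⁻¹` or `log`, which blows up at `0`, so `F ∘ u` is either locally
constant or not differentiable, and its `derivWithin` is `0` in both cases.
-/

open Set Filter Topology Bornology

section Stationary

variable {𝕜 E : Type*} [NontriviallyNormedField 𝕜] [NormedAddCommGroup E] [NormedSpace 𝕜 E]

theorem derivWithin_eq_zero_of_hasDerivWithinAt_zero {f : 𝕜 → E} {s : Set 𝕜} {x : 𝕜}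
    (h : HasDerivWithinAt f 0 s x) : derivWithin f s x = 0 := by
  by_cases hs : UniqueDiffWithinAt 𝕜 s x
  · exact h.derivWithin hs
  · exact derivWithin_zero_of_not_uniqueDiffWithinAt hs

theorem derivWithin_comp_eq_zero_of_tendsto_cobounded {X : Type*} [TopologicalSpace X]
    {F : X → E} {u : 𝕜 → X} {s : Set 𝕜} {x : 𝕜} (hu : ContinuousWithinAt u s x)
    (hF : Tendsto F (𝓝[≠] u x) (cobounded E)) : derivWithin (fun r => F (u r)) s x = 0 := by
  by_cases hd : DifferentiableWithinAt 𝕜 (fun r => F (u r)) s x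
  · obtain ⟨V, hV, W, hW, hVW⟩ := Filter.disjoint_iff.1 (Metric.disjoint_nhds_cobounded (F (u x)))
    have hbounded : ∀ᶠ r in 𝓝[s] x, F (u r) ∈ V := hd.continuousWithinAt.eventually_mem hV
    have hlarge : ∀ᶠ r in 𝓝[s] x, u r ≠ u x → F (u r) ∈ W :=
      hu.eventually (eventually_nhdsWithin_iff.1 (hF.eventually_mem hW))
    have hconst : (fun r => F (u r)) =ᶠ[𝓝[s] x] fun _ => F (u x) := by
      filter_upwards [hbounded, hlarge] with r hrV hrW
      by_contra hne
      exact disjoint_left.1 hVW hrV (hrW fun h => hne (congrArg F h))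
    rw [hconst.derivWithin_eq rfl, derivWithin_fun_const, Pi.zero_apply]
  · exact derivWithin_zero_of_not_differentiableWithinAt hd

theorem derivWithin_inv_eq_zero_of_hasDerivWithinAt_zero {u : 𝕜 → 𝕜} {s : Set 𝕜} {x : 𝕜}
    (hu : HasDerivWithinAt u 0 s x) : derivWithin (fun r => (u r)⁻¹) s x = 0 := by
  by_cases h : u x = 0
  · exact derivWithin_comp_eq_zero_of_tendsto_cobounded hu.continuousWithinAt
      (h ▸ tendsto_inv₀_nhdsNE_zero)
  · exact derivWithin_eq_zero_of_hasDerivWithinAt_zero (by simpa using hu.fun_inv h)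

theorem derivWithin_log_eq_zero_of_hasDerivWithinAt_zero {u : ℝ → ℝ} {s : Set ℝ} {x : ℝ}
    (hu : HasDerivWithinAt u 0 s x) : derivWithin (fun r => Real.log (u r)) s x = 0 := by
  by_cases h : u x = 0
  · exact derivWithin_comp_eq_zero_of_tendsto_cobounded hu.continuousWithinAt
      (h ▸ Real.tendsto_log_nhdsNE_zero.mono_right IsOrderBornology.atBot_le_cobounded)
  · exact derivWithin_eq_zero_of_hasDerivWithinAt_zero (by simpa using hu.log h)

end Stationary

section SingularODE

variable {E : Type*} [NormedAddCommGroup E] [NormedSpace ℝ E]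

theorem hasDerivWithinAt_Icc_left_of_tendsto_derivWithin {f : ℝ → E} {a b : ℝ} {e : E}
    (hab : a < b) (hf : DifferentiableOn ℝ f (Icc a b))
    (hlim : Tendsto (derivWithin f (Icc a b)) (𝓝[>] a) (𝓝 e)) :
    HasDerivWithinAt f e (Icc a b) a := by
  have hderiv : derivWithin f (Icc a b) =ᶠ[𝓝[>] a] deriv f := by
    filter_upwards [Ioo_mem_nhdsGT hab] with r hr
    exact derivWithin_of_mem_nhds (Icc_mem_nhds hr.1 hr.2)
  exact (hasDerivWithinAt_Ici_of_tendsto_deriv (hf.mono Ioo_subset_Icc_self)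
    ((hf a (left_mem_Icc.2 hab.le)).continuousWithinAt.mono Ioo_subset_Icc_self)
    (Ioo_mem_nhdsGT hab) (hlim.congr' hderiv)).mono Icc_subset_Ici_self

variable {b : ℝ} {w : ℝ → ℝ}

theorem hasDerivWithinAt_zero_left_of_smul_derivWithin_eq {f G : ℝ → E} (hb : 0 < b)
    (hf : DifferentiableOn ℝ f (Icc 0 b)) (hG : ContinuousWithinAt G (Icc 0 b) 0)
    (hw : DifferentiableWithinAt ℝ w (Icc 0 b) 0) (hw0 : w 0 = 0)
    (hode : ∀ r ∈ Icc 0 b, r • derivWithin f (Icc 0 b) r = w r ^ 2 • G r) :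
    HasDerivWithinAt f 0 (Icc 0 b) 0 := by
  refine hasDerivWithinAt_Icc_left_of_tendsto_derivWithin hb hf ?_
  have hIcc : 𝓝[>] (0 : ℝ) ≤ 𝓝[Icc 0 b] 0 := nhdsWithin_le_of_mem (Icc_mem_nhdsGT hb)
  have hslope : Tendsto (fun r => w r / r) (𝓝[>] 0) (𝓝 (derivWithin w (Icc 0 b) 0)) := by
    have h := (hw.hasDerivWithinAt.mono_of_mem_nhdsWithin (Icc_mem_nhdsGT hb) :
      HasDerivWithinAt w _ (Ioi 0) 0)
    simpa [slope_fun_def_field, hw0] using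
      (hasDerivWithinAt_iff_tendsto_slope' self_notMem_Ioi).1 h
  have hw_lim : Tendsto w (𝓝[>] 0) (𝓝 0) := by
    simpa only [hw0] using hw.continuousWithinAt.tendsto.mono_left hIcc
  have hlim := (hslope.mul hw_lim).smul (hG.tendsto.mono_left hIcc)
  rw [mul_zero, zero_smul] at hlim
  refine hlim.congr' ?_
  filter_upwards [Ioo_mem_nhdsGT hb] with r hr
  rw [← inv_smul_smul₀ hr.1.ne' (derivWithin f (Icc 0 b) r), hode r (Ioo_subset_Icc_self hr),
    smul_smul]
  congr 1
  ring

theorem hasDerivWithinAt_zero_of_smul_derivWithin_eq {f G : ℝ → E} {x : ℝ} (hb : 0 < b)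
    (hf : DifferentiableOn ℝ f (Icc 0 b)) (hG : ContinuousWithinAt G (Icc 0 b) 0)
    (hw : DifferentiableWithinAt ℝ w (Icc 0 b) 0) (hw0 : w 0 = 0) (hwb : w b = 0)
    (hode : ∀ r ∈ Icc 0 b, r • derivWithin f (Icc 0 b) r = w r ^ 2 • G r)
    (hx : x ∈ ({0, b} : Set ℝ)) : HasDerivWithinAt f 0 (Icc 0 b) x := by
  obtain rfl | rfl := hx
  · exact hasDerivWithinAt_zero_left_of_smul_derivWithin_eq hb hf hG hw hw0 hode
  · have hx := right_mem_Icc.2 hb.le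
    have hderiv : derivWithin f (Icc 0 x) x = 0 := by simpa [hwb, hb.ne'] using hode x hx
    simpa only [hderiv] using (hf x hx).hasDerivWithinAt

theorem hasDerivWithinAt_zero_of_machSq_ode {γ x : ℝ} {M2 q : ℝ → ℝ} (hγ : 1 < γ) (hb : 0 < b)
    (hM2 : DifferentiableOn ℝ M2 (Icc 0 b)) (hM2_pos : ∀ r ∈ Icc 0 b, 0 < M2 r)
    (hq : ContinuousWithinAt q (Icc 0 b) 0) (hq0 : q 0 ≠ 0)
    (hw : DifferentiableWithinAt ℝ w (Icc 0 b) 0) (hw0 : w 0 = 0) (hwb : w b = 0)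
    (hode : ∀ r ∈ Icc 0 b, r * derivWithin (fun s => 1 / M2 s) (Icc 0 b) r =
      ((γ - 1) * w r ^ 2 / (4 * q r ^ 2)) *
        ((γ + 1) ^ 2 / (γ - 1 + 2 / M2 r) - (γ - 1 + 2 / M2 r)))
    (hx : x ∈ ({0, b} : Set ℝ)) : HasDerivWithinAt M2 0 (Icc 0 b) x := by
  have h0 : (0 : ℝ) ∈ Icc 0 b := left_mem_Icc.2 hb.le
  have hxI : x ∈ Icc 0 b := by obtain rfl | rfl := hx <;> simp [hb.le]
  have hM2_0 := hM2_pos 0 h0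
  have hden : γ - 1 + 2 / M2 0 ≠ 0 := (add_pos (sub_pos.2 hγ) (by positivity)).ne'
  have hcont : ContinuousWithinAt (fun r => γ - 1 + 2 / M2 r) (Icc 0 b) 0 :=
    continuousWithinAt_const.add
      (continuousWithinAt_const.div (hM2 0 h0).continuousWithinAt hM2_0.ne')
  have hinv : HasDerivWithinAt (fun s => 1 / M2 s) 0 (Icc 0 b) x := by
    refine hasDerivWithinAt_zero_of_smul_derivWithin_eq
      (G := fun r => (γ - 1) / (4 * q r ^ 2) *
        ((γ + 1) ^ 2 / (γ - 1 + 2 / M2 r) - (γ - 1 + 2 / M2 r)))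
      hb ((differentiableOn_const 1).fun_div hM2 fun r hr => (hM2_pos r hr).ne') ?_ hw hw0 hwb
      (fun r hr => ?_) hx
    · exact (continuousWithinAt_const.div (continuousWithinAt_const.mul (hq.pow 2))
        (mul_ne_zero four_ne_zero (pow_ne_zero 2 hq0))).mul
          ((continuousWithinAt_const.div hcont hden).sub hcont)
    · simp only [smul_eq_mul, hode r hr]
      ring
  simpa using hinv.fun_inv (one_div_pos.2 (hM2_pos x hxI)).ne'

end SingularODE

section GasDynamics

/-- The squared Mach number `M² = ρ q² / (γ p)` of a polytropic gas. -/
noncomputable def machSq (γ p ρ q : ℝ) : ℝ := ρ * q ^ 2 / (γ * p)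

/-- The specific entropy `s` of a polytropic gas, obtained by solving the equation of state
`p = A exp (s / c_v) ρ ^ γ` for `s`. -/
noncomputable def entropy (cv A γ p ρ : ℝ) : ℝ := cv * Real.log (p / (A * ρ ^ γ))

/-- The pressure `p₊ = ((1 + μ²) M² - μ²) p` behind a shock with upstream state `(p, ρ, q)`, as
given by the Rankine–Hugoniot conditions. The argument `μ2` stands for `μ² = (γ - 1) / (γ + 1)`. -/
noncomputable def downstreamPressure (γ μ2 p ρ q : ℝ) : ℝ :=
  ((1 + μ2) * machSq γ p ρ q - μ2) * p

/-- The speed `q₊ = μ² (q + 2 c² / ((γ - 1) q))`, with `c² = γ p / ρ`, behind a shock with upstream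
state `(p, ρ, q)`, as given by the Rankine–Hugoniot conditions. -/
noncomputable def downstreamSpeed (γ μ2 p ρ q : ℝ) : ℝ :=
  μ2 * (q + 2 / (γ - 1) * (γ * p / ρ) / q)

/-- The density `ρ₊ = ρ q / q₊` behind a shock with upstream state `(p, ρ, q)`, as given by
conservation of mass. -/
noncomputable def downstreamDensity (γ μ2 p ρ q : ℝ) : ℝ :=
  ρ * q / downstreamSpeed γ μ2 p ρ q

theorem machSq_pos {γ p ρ q : ℝ} (hγ : 0 < γ) (hp : 0 < p) (hρ : 0 < ρ) (hq : 0 < q) :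
    0 < machSq γ p ρ q := by
  unfold machSq
  positivity

theorem downstreamSpeed_pos {γ μ2 p ρ q : ℝ} (hγ : 1 < γ) (hμ2 : 0 < μ2) (hp : 0 < p) (hρ : 0 < ρ)
    (hq : 0 < q) : 0 < downstreamSpeed γ μ2 p ρ q := by
  have : 0 < γ - 1 := sub_pos.2 hγ
  unfold downstreamSpeed
  positivity

theorem downstreamDensity_pos {γ μ2 p ρ q : ℝ} (hγ : 1 < γ) (hμ2 : 0 < μ2) (hp : 0 < p)
    (hρ : 0 < ρ) (hq : 0 < q) : 0 < downstreamDensity γ μ2 p ρ q :=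
  div_pos (mul_pos hρ hq) (downstreamSpeed_pos hγ hμ2 hp hρ hq)

theorem differentiableOn_machSq {γ : ℝ} {p ρ q : ℝ → ℝ} {s : Set ℝ} (hγ : γ ≠ 0)
    (hp : DifferentiableOn ℝ p s) (hρ : DifferentiableOn ℝ ρ s) (hq : DifferentiableOn ℝ q s)
    (hp0 : ∀ r ∈ s, p r ≠ 0) :
    DifferentiableOn ℝ (fun r => machSq γ (p r) (ρ r) (q r)) s :=
  (hρ.mul (hq.pow 2)).fun_div (hp.const_mul γ) fun r hr => mul_ne_zero hγ (hp0 r hr)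

variable {γ x : ℝ} {p ρ q : ℝ → ℝ} {s : Set ℝ}

theorem hasDerivWithinAt_zero_density_of_machSq (hγ : γ ≠ 0) (hp : HasDerivWithinAt p 0 s x)
    (hq : HasDerivWithinAt q 0 s x)
    (hM2 : HasDerivWithinAt (fun r => machSq γ (p r) (ρ r) (q r)) 0 s x)
    (hp0 : ∀ r ∈ s, p r ≠ 0) (hq0 : ∀ r ∈ s, q r ≠ 0) (hx : x ∈ s) :
    HasDerivWithinAt ρ 0 s x := by
  have hquot : HasDerivWithinAt
      (fun r => machSq γ (p r) (ρ r) (q r) * (γ * p r) / q r ^ 2) 0 s x := by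
    simpa using (hM2.fun_mul (hp.const_mul γ)).fun_div (hq.fun_pow 2) (pow_ne_zero 2 (hq0 x hx))
  refine hquot.congr_of_mem (fun r hr => ?_) hx
  have hpr := hp0 r hr
  have hqr := hq0 r hr
  unfold machSq
  field_simp

theorem hasDerivWithinAt_zero_downstreamPressure (μ2 : ℝ) (hγ : γ ≠ 0)
    (hp : HasDerivWithinAt p 0 s x) (hρ : HasDerivWithinAt ρ 0 s x)
    (hq : HasDerivWithinAt q 0 s x) (hp0 : p x ≠ 0) :
    HasDerivWithinAt (fun r => downstreamPressure γ μ2 (p r) (ρ r) (q r)) 0 s x := by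
  have hM2 : HasDerivWithinAt (fun r => machSq γ (p r) (ρ r) (q r)) 0 s x := by
    simpa [machSq] using
      (hρ.fun_mul (hq.fun_pow 2)).fun_div (hp.const_mul γ) (mul_ne_zero hγ hp0)
  simpa [downstreamPressure] using ((hM2.const_mul (1 + μ2)).sub_const μ2).fun_mul hp

theorem hasDerivWithinAt_zero_downstreamSpeed (γ μ2 : ℝ)
    (hp : HasDerivWithinAt p 0 s x) (hρ : HasDerivWithinAt ρ 0 s x)
    (hq : HasDerivWithinAt q 0 s x) (hρ0 : ρ x ≠ 0) (hq0 : q x ≠ 0) :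
    HasDerivWithinAt (fun r => downstreamSpeed γ μ2 (p r) (ρ r) (q r)) 0 s x := by
  have hc2 : HasDerivWithinAt (fun r => γ * p r / ρ r) 0 s x := by
    simpa using (hp.const_mul γ).fun_div hρ hρ0
  simpa [downstreamSpeed] using
    (hq.fun_add ((hc2.const_mul (2 / (γ - 1))).fun_div hq hq0)).const_mul μ2

theorem hasDerivWithinAt_zero_downstreamDensity {μ2 : ℝ} (hρ : HasDerivWithinAt ρ 0 s x)
    (hq : HasDerivWithinAt q 0 s x)
    (hqp : HasDerivWithinAt (fun r => downstreamSpeed γ μ2 (p r) (ρ r) (q r)) 0 s x)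
    (hqp0 : downstreamSpeed γ μ2 (p x) (ρ x) (q x) ≠ 0) :
    HasDerivWithinAt (fun r => downstreamDensity γ μ2 (p r) (ρ r) (q r)) 0 s x := by
  simpa [downstreamDensity] using (hρ.fun_mul hq).fun_div hqp hqp0

theorem derivWithin_machSq_eq_zero (γ : ℝ) (hp : HasDerivWithinAt p 0 s x)
    (hρ : HasDerivWithinAt ρ 0 s x) (hq : HasDerivWithinAt q 0 s x) (hρ0 : ρ x ≠ 0)
    (hq0 : q x ≠ 0) : derivWithin (fun r => machSq γ (p r) (ρ r) (q r)) s x = 0 := by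
  have hinv : HasDerivWithinAt (fun r => γ * p r / (ρ r * q r ^ 2)) 0 s x := by
    simpa using (hp.const_mul γ).fun_div (hρ.fun_mul (hq.fun_pow 2))
      (mul_ne_zero hρ0 (pow_ne_zero 2 hq0))
  simpa only [machSq, inv_div] using derivWithin_inv_eq_zero_of_hasDerivWithinAt_zero hinv

theorem derivWithin_entropy_eq_zero (cv γ : ℝ) {A : ℝ} (hA : A ≠ 0)
    (hp : HasDerivWithinAt p 0 s x) (hρ : HasDerivWithinAt ρ 0 s x) (hρ0 : 0 < ρ x) :
    derivWithin (fun r => entropy cv A γ (p r) (ρ r)) s x = 0 := by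
  have hρ_rpow : HasDerivWithinAt (fun r => ρ r ^ γ) 0 s x := by
    simpa using hρ.rpow_const (p := γ) (Or.inl hρ0.ne')
  have hquot : HasDerivWithinAt (fun r => p r / (A * ρ r ^ γ)) 0 s x := by
    simpa using hp.fun_div (hρ_rpow.const_mul A)
      (mul_ne_zero hA (Real.rpow_pos_of_pos hρ0 γ).ne')
  simp only [entropy, derivWithin_const_mul_field,
    derivWithin_log_eq_zero_of_hasDerivWithinAt_zero hquot, mul_zero]

theorem derivWithin_downstream_eq_zero {μ2 A : ℝ} (cv : ℝ) (hγ : 1 < γ) (hμ2 : 0 < μ2) (hA : A ≠ 0)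
    (hp : HasDerivWithinAt p 0 s x) (hρ : HasDerivWithinAt ρ 0 s x) (hq : HasDerivWithinAt q 0 s x)
    (hp_pos : 0 < p x) (hρ_pos : 0 < ρ x) (hq_pos : 0 < q x) :
    let pp r := downstreamPressure γ μ2 (p r) (ρ r) (q r)
    let ρp r := downstreamDensity γ μ2 (p r) (ρ r) (q r)
    let qp r := downstreamSpeed γ μ2 (p r) (ρ r) (q r)
    derivWithin pp s x = 0 ∧ derivWithin ρp s x = 0 ∧ derivWithin qp s x = 0 ∧
      derivWithin (fun r => machSq γ (pp r) (ρp r) (qp r)) s x = 0 ∧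
      derivWithin (fun r => entropy cv A γ (pp r) (ρp r)) s x = 0 := by
  have hqp_pos := downstreamSpeed_pos hγ hμ2 hp_pos hρ_pos hq_pos
  have hρp_pos := downstreamDensity_pos hγ hμ2 hp_pos hρ_pos hq_pos
  have hpp := hasDerivWithinAt_zero_downstreamPressure μ2 (one_pos.trans hγ).ne' hp hρ hq hp_pos.ne'
  have hqp := hasDerivWithinAt_zero_downstreamSpeed γ μ2 hp hρ hq hρ_pos.ne' hq_pos.ne'
  have hρp := hasDerivWithinAt_zero_downstreamDensity hρ hq hqp hqp_pos.ne'
  exact ⟨derivWithin_eq_zero_of_hasDerivWithinAt_zero hpp,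
    derivWithin_eq_zero_of_hasDerivWithinAt_zero hρp,
    derivWithin_eq_zero_of_hasDerivWithinAt_zero hqp,
    derivWithin_machSq_eq_zero γ hpp hρp hqp hρp_pos.ne' hqp_pos.ne',
    derivWithin_entropy_eq_zero cv γ hA hpp hρp hρp_pos⟩

end GasDynamics

theorem stmt_6_general (γ μ2 A cv r₀ : ℝ) (hγ : 1 < γ) (hμ2 : μ2 = (γ - 1) / (γ + 1))
    (hA : 0 < A) (hr₀ : 0 < r₀)
    (pm ρm qm wm c2m M2m pp qp ρp M2p sm sp : ℝ → ℝ)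
    (hpm : DifferentiableOn ℝ pm (Set.Icc 0 r₀))
    (hρm : DifferentiableOn ℝ ρm (Set.Icc 0 r₀))
    (hqm : DifferentiableOn ℝ qm (Set.Icc 0 r₀))
    (hwm : DifferentiableWithinAt ℝ wm (Set.Icc 0 r₀) 0)
    (hpm_pos : ∀ r ∈ Set.Icc (0 : ℝ) r₀, 0 < pm r)
    (hρm_pos : ∀ r ∈ Set.Icc (0 : ℝ) r₀, 0 < ρm r)
    (hqm_pos : ∀ r ∈ Set.Icc (0 : ℝ) r₀, 0 < qm r)
    (hc2m : ∀ r, c2m r = γ * pm r / ρm r)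
    (hM2m : ∀ r, M2m r = ρm r * (qm r) ^ 2 / (γ * pm r))
    (hpp : ∀ r, pp r = ((1 + μ2) * M2m r - μ2) * pm r)
    (hqp : ∀ r, qp r = μ2 * (qm r + (2 / (γ - 1)) * c2m r / qm r))
    (hρp : ∀ r, ρp r = ρm r * qm r / qp r)
    (hM2p : ∀ r, M2p r = ρp r * (qp r) ^ 2 / (γ * pp r))
    (hsm : ∀ r, sm r = cv * Real.log (pm r / (A * ρm r ^ γ)))
    (hsp : ∀ r, sp r = cv * Real.log (pp r / (A * ρp r ^ γ)))
    (h1 : ∀ r ∈ Set.Icc (0 : ℝ) r₀,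
      r * derivWithin pm (Set.Icc 0 r₀) r = ρm r * (wm r) ^ 2)
    (h2 : ∀ r ∈ Set.Icc (0 : ℝ) r₀,
      r * derivWithin (fun s => 1 / M2m s) (Set.Icc 0 r₀) r =
        ((γ - 1) * (wm r) ^ 2 / (4 * (qm r) ^ 2)) *
          ((γ + 1) ^ 2 / (γ - 1 + 2 / M2m r) - (γ - 1 + 2 / M2m r)))
    (h3 : wm 0 = 0) (h3' : wm r₀ = 0)
    (h4 : derivWithin qm (Set.Icc 0 r₀) 0 = 0)
    (h4' : derivWithin qm (Set.Icc 0 r₀) r₀ = 0) :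
    ∀ x ∈ ({0, r₀} : Set ℝ),
      derivWithin pm (Set.Icc 0 r₀) x = 0 ∧
      derivWithin pp (Set.Icc 0 r₀) x = 0 ∧
      derivWithin ρm (Set.Icc 0 r₀) x = 0 ∧
      derivWithin ρp (Set.Icc 0 r₀) x = 0 ∧
      derivWithin qp (Set.Icc 0 r₀) x = 0 ∧
      derivWithin M2m (Set.Icc 0 r₀) x = 0 ∧
      derivWithin M2p (Set.Icc 0 r₀) x = 0 ∧
      derivWithin sm (Set.Icc 0 r₀) x = 0 ∧
      derivWithin sp (Set.Icc 0 r₀) x = 0 := by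
  obtain rfl : c2m = fun r => γ * pm r / ρm r := funext hc2m
  obtain rfl : M2m = fun r => machSq γ (pm r) (ρm r) (qm r) := funext hM2m
  obtain rfl : pp = fun r => downstreamPressure γ μ2 (pm r) (ρm r) (qm r) := funext hpp
  obtain rfl : qp = fun r => downstreamSpeed γ μ2 (pm r) (ρm r) (qm r) := funext hqp
  obtain rfl : ρp = fun r => downstreamDensity γ μ2 (pm r) (ρm r) (qm r) := funext hρp
  obtain rfl : M2p = fun r => machSq γ _ _ _ := funext hM2p
  obtain rfl : sm = fun r => entropy cv A γ (pm r) (ρm r) := funext hsm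
  obtain rfl : sp = fun r => entropy cv A γ _ _ := funext hsp
  intro x hx
  have hγ0 : 0 < γ := one_pos.trans hγ
  have hμ2_pos : 0 < μ2 := hμ2 ▸ div_pos (sub_pos.2 hγ) (by positivity)
  have h0I : (0 : ℝ) ∈ Icc 0 r₀ := left_mem_Icc.2 hr₀.le
  have hxI : x ∈ Icc 0 r₀ := by obtain rfl | rfl := hx <;> simp [hr₀.le]
  have hp0 := fun r hr => (hpm_pos r hr).ne'
  have hq0 := fun r hr => (hqm_pos r hr).ne'
  have hp : HasDerivWithinAt pm 0 (Icc 0 r₀) x :=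
    hasDerivWithinAt_zero_of_smul_derivWithin_eq hr₀ hpm (hρm 0 h0I).continuousWithinAt hwm h3 h3'
      (fun r hr => (h1 r hr).trans (mul_comm _ _)) hx
  have hq : HasDerivWithinAt qm 0 (Icc 0 r₀) x := by
    have hderiv : derivWithin qm (Icc 0 r₀) x = 0 := by obtain rfl | rfl := hx <;> assumption
    simpa only [hderiv] using (hqm x hxI).hasDerivWithinAt
  have hM2 := hasDerivWithinAt_zero_of_machSq_ode hγ hr₀
    (differentiableOn_machSq hγ0.ne' hpm hρm hqm hp0)
    (fun r hr => machSq_pos hγ0 (hpm_pos r hr) (hρm_pos r hr) (hqm_pos r hr))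
    (hqm 0 h0I).continuousWithinAt (hq0 0 h0I) hwm h3 h3' h2 hx
  have hρ := hasDerivWithinAt_zero_density_of_machSq hγ0.ne' hp hq hM2 hp0 hq0 hxI
  obtain ⟨hpp, hρp, hqp, hM2p, hsp⟩ := derivWithin_downstream_eq_zero cv hγ hμ2_pos hA.ne' hp hρ hq
    (hpm_pos x hxI) (hρm_pos x hxI) (hqm_pos x hxI)
  exact ⟨derivWithin_eq_zero_of_hasDerivWithinAt_zero hp, hpp,
    derivWithin_eq_zero_of_hasDerivWithinAt_zero hρ, hρp, hqp,
    derivWithin_eq_zero_of_hasDerivWithinAt_zero hM2, hM2p,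
    derivWithin_entropy_eq_zero cv γ hA.ne' hp hρ (hρm_pos x hxI), hsp⟩

/-- First part of Lemma 3.1: the one-sided radial derivatives of
`p₋, p₊, ρ₋, ρ₊, q₊, M₋², M₊², s₋, s₊` vanish at `r = 0` and `r = r₀`. -/
theorem stmt_6 (γ μ2 A cv r₀ : ℝ) (hγ : 1 < γ) (hμ2 : μ2 = (γ - 1) / (γ + 1))
    (hA : 0 < A) (hcv : 0 < cv) (hr₀ : 0 < r₀)
    (pm ρm qm wm c2m M2m pp qp ρp wp M2p sm sp : ℝ → ℝ)
    (hpm : ContDiffOn ℝ 2 pm (Set.Icc 0 r₀))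
    (hρm : ContDiffOn ℝ 2 ρm (Set.Icc 0 r₀))
    (hqm : ContDiffOn ℝ 2 qm (Set.Icc 0 r₀))
    (hwm : ContDiffOn ℝ 2 wm (Set.Icc 0 r₀))
    (hpm_pos : ∀ r ∈ Set.Icc (0:ℝ) r₀, 0 < pm r)
    (hρm_pos : ∀ r ∈ Set.Icc (0:ℝ) r₀, 0 < ρm r)
    (hqm_pos : ∀ r ∈ Set.Icc (0:ℝ) r₀, 0 < qm r)
    (hc2m : ∀ r, c2m r = γ * pm r / ρm r)
    (hM2m : ∀ r, M2m r = ρm r * (qm r) ^ 2 / (γ * pm r))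
    (hpp : ∀ r, pp r = ((1 + μ2) * M2m r - μ2) * pm r)
    (hqp : ∀ r, qp r = μ2 * (qm r + (2 / (γ - 1)) * c2m r / qm r))
    (hρp : ∀ r, ρp r = ρm r * qm r / qp r)
    (hwp : ∀ r, wp r = wm r)
    (hM2p : ∀ r, M2p r = ρp r * (qp r) ^ 2 / (γ * pp r))
    (hsm : ∀ r, sm r = cv * Real.log (pm r / (A * ρm r ^ γ)))
    (hsp : ∀ r, sp r = cv * Real.log (pp r / (A * ρp r ^ γ)))
    (h1 : ∀ r ∈ Set.Icc (0:ℝ) r₀,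
      r * derivWithin pm (Set.Icc 0 r₀) r = ρm r * (wm r) ^ 2)
    (h2 : ∀ r ∈ Set.Icc (0:ℝ) r₀,
      r * derivWithin (fun s => 1 / M2m s) (Set.Icc 0 r₀) r =
        ((γ - 1) * (wm r) ^ 2 / (4 * (qm r) ^ 2)) *
          ((γ + 1) ^ 2 / (γ - 1 + 2 / M2m r) - (γ - 1 + 2 / M2m r)))
    (h3 : wm 0 = 0) (h3' : wm r₀ = 0)
    (h4 : derivWithin qm (Set.Icc 0 r₀) 0 = 0)
    (h4' : derivWithin qm (Set.Icc 0 r₀) r₀ = 0) :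
    ∀ x ∈ ({0, r₀} : Set ℝ),
      derivWithin pm (Set.Icc 0 r₀) x = 0 ∧
      derivWithin pp (Set.Icc 0 r₀) x = 0 ∧
      derivWithin ρm (Set.Icc 0 r₀) x = 0 ∧
      derivWithin ρp (Set.Icc 0 r₀) x = 0 ∧
      derivWithin qp (Set.Icc 0 r₀) x = 0 ∧
      derivWithin M2m (Set.Icc 0 r₀) x = 0 ∧
      derivWithin M2p (Set.Icc 0 r₀) x = 0 ∧
      derivWithin sm (Set.Icc 0 r₀) x = 0 ∧
      derivWithin sp (Set.Icc 0 r₀) x = 0 := by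
  exact stmt_6_general γ μ2 A cv r₀ hγ hμ2 hA hr₀ pm ρm qm wm c2m M2m pp qp ρp M2p sm sp
    (hpm.differentiableOn two_ne_zero) (hρm.differentiableOn two_ne_zero)
    (hqm.differentiableOn two_ne_zero)
    (hwm.differentiableOn two_ne_zero 0 (Set.left_mem_Icc.2 hr₀.le)) hpm_pos hρm_pos hqm_pos
    hc2m hM2m hpp hqp hρp hM2p hsm hsp h1 h2 h3 h3' h4 h4'
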